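/- Let m, N ≥ 1, and let K = Span{E_κ : κ ∈ Ω, κ_m = 0} ⊆ ℂ^Ω. Assume that the inequality dim R ≥ (2 − (m−1)/(N+m−1)) · dim(F ∩ R), with equality iff R = {0} or R = ℂ^Ω, holds for every ξ ∈ ℂ^m (with 1, ξ_1, …, ξ_m linearly independent over ℚ̄) and every subspace R of ℂ^Ω defined over ℚ̄ satisfying dim(F ∩ R ∩ K) ≥ 2·dim(F ∩ R) − dim R. Then this inequality (with the same equality characterization) holds for every such ξ ∈ ℂ^m and every subspace R of ℂ^Ω defined over ℚ̄. -/

import Mathlib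

open Polynomial

noncomputable section

/-- The weight `|κ| = κ₁ + … + κ_m` of a multi-index. -/
def wt {m : ℕ} (κ : Fin m → ℕ) : ℕ := ∑ j, κ j

/-- `κ ∈ Ω`, i.e. `N - 1 ≤ |κ| ≤ N`. -/
def inOmega (m N : ℕ) (κ : Fin m → ℕ) : Prop := N - 1 ≤ wt κ ∧ wt κ ≤ N

/-- `κ - e_j` (only meaningful when `κ j ≥ 1`; guarded at use sites). -/
def sub1 {m : ℕ} (κ : Fin m → ℕ) (j : Fin m) : Fin m → ℕ :=
  Function.update κ j (κ j - 1)

/-- The canonical basis vector `E_κ`. -/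
def Evec {m : ℕ} (κ : Fin m → ℕ) : (Fin m → ℕ) → ℂ := fun μ => if μ = κ then 1 else 0

/-- The vector `Z_κ = E_κ + ∑_j ξ_j E_{κ-e_j}` (with `E_{κ-e_j} = 0` when `κ_j = 0`). -/
def Zvec {m : ℕ} (ξ : Fin m → ℂ) (κ : Fin m → ℕ) : (Fin m → ℕ) → ℂ :=
  Evec κ + ∑ j : Fin m, (if κ j = 0 then 0 else ξ j • Evec (sub1 κ j))

/-- `ℂ^Ω`, realized as the space of families supported on
`Ω = {κ : N-1 ≤ |κ| ≤ N}` (the span of the `E_κ`, `κ ∈ Ω`). -/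
def OmegaSpace (m N : ℕ) : Submodule ℂ ((Fin m → ℕ) → ℂ) :=
  Submodule.span ℂ {v | ∃ κ, inOmega m N κ ∧ v = Evec κ}

/-- `F = Span{Z_κ : κ ∈ Θ} ⊆ ℂ^Ω`, where `Θ = {κ : |κ| = N}`. -/
def Fspace (m N : ℕ) (ξ : Fin m → ℂ) : Submodule ℂ ((Fin m → ℕ) → ℂ) :=
  Submodule.span ℂ {v | ∃ κ, wt κ = N ∧ v = Zvec ξ κ}

/-- A subspace of `ℂ^Ω` is defined over `ℚ̄` if it is spanned by vectors all of whose
coordinates are algebraic numbers (equivalently, it has a `ℂ`-basis of such vectors). -/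
def DefinedOverQbar {m : ℕ} (R : Submodule ℂ ((Fin m → ℕ) → ℂ)) : Prop :=
  ∃ s : Set ((Fin m → ℕ) → ℂ), (∀ v ∈ s, ∀ κ, IsAlgebraic ℚ (v κ)) ∧
    Submodule.span ℂ s = R

/-- `1, ξ₁, …, ξ_m` are linearly independent over `ℚ̄`. -/
def LinIndepOverQbar (m : ℕ) (ξ : Fin m → ℂ) : Prop :=
  ∀ (a : ℂ) (c : Fin m → ℂ), IsAlgebraic ℚ a → (∀ j, IsAlgebraic ℚ (c j)) →
    a + ∑ j : Fin m, c j * ξ j = 0 → a = 0 ∧ ∀ j, c j = 0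
/-- The dimension inequality of Theorem 5.1, together with its case of equality:
`dim R ≥ (2 - (m-1)/(N+m-1)) · dim(F ∩ R)`, with equality iff `R = {0}` or `R = ℂ^Ω`. -/
def RatIneq (m N : ℕ) (ξ : Fin m → ℂ) (R : Submodule ℂ ((Fin m → ℕ) → ℂ)) : Prop :=
  (2 - ((m : ℝ) - 1) / ((N : ℝ) + (m : ℝ) - 1)) *
      (Module.finrank ℂ ↥(Fspace m N ξ ⊓ R) : ℝ) ≤ (Module.finrank ℂ ↥R : ℝ) ∧
  ((Module.finrank ℂ ↥R : ℝ) =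
      (2 - ((m : ℝ) - 1) / ((N : ℝ) + (m : ℝ) - 1)) *
        (Module.finrank ℂ ↥(Fspace m N ξ ⊓ R) : ℝ) ↔
    R = ⊥ ∨ R = OmegaSpace m N)
/-- `K = Span{E_κ : κ ∈ Ω, κ_{j₀} = 0}`. -/
def Kspace (m N : ℕ) (j0 : Fin m) : Submodule ℂ ((Fin m → ℕ) → ℂ) :=
  Submodule.span ℂ {v | ∃ κ, inOmega m N κ ∧ κ j0 = 0 ∧ v = Evec κ}

/-!
A family `f : ℕ^m → ℂ` is read as the linear functional `X^κ ↦ f κ` on polynomials. Contraction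
`D_v f = ∑ j, v_j f(· + e_j)` is then the transpose of multiplication by the linear form
`∑ j, v_j X_j`, the space `F_ξ` consists of the `f ∈ ℂ^Ω` with `f = D_ξ f` in degree `N - 1`, and
a linear change of variables `A` over `ℚ̄` acts on `ℂ^Ω`, preserves rationality of subspaces and
carries `F_{ξA}` to `F_ξ`.

Choose a valuation ring of `ℂ` containing `ℚ̄` but not some (transcendental) `ξ_i`, and divide by
the `ξ_j` of largest valuation: by the Nullstellensatz, `ξ_j⁻¹` and the `ξ_i / ξ_j` specialize to
`0` and to the coordinates of a nonzero `v ∈ ℚ̄^m`. Ranks do not increase under specialization, so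
on a rational subspace `R` the degree `N - 1` part of `D_v` has rank at most that of `D_ξ - 1`,
whose kernel is `F ∩ R`. Hence `dim (R ∩ ker D_v) ≥ dim (F ∩ R)` and
`dim (F ∩ R ∩ ker D_v) ≥ 2 dim (F ∩ R) - dim R`. A change of variables turns `v` into `e_m`, and
`F ∩ ker D_{e_m} ⊆ K`.
-/

open Module Matrix

section Rank

variable {k L : Type*} [Field k] [Field L] {a b : Type*} [Fintype b]

theorem exists_rank_factorization [Fintype a] (A : Matrix a b k) :
    ∃ (C : Matrix a (Fin A.rank) k) (D : Matrix (Fin A.rank) b k)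
      (P : Matrix (Fin A.rank) a k) (Q : Matrix b (Fin A.rank) k),
      A = C * D ∧ P * C = 1 ∧ D * Q = 1 := by
  classical
  let f := A.toLin'
  let e : LinearMap.range f ≃ₗ[k] (Fin A.rank → k) :=
    LinearEquiv.ofFinrankEq _ _ (finrank_fin_fun k).symm
  let c := (LinearMap.range f).subtype ∘ₗ e.symm.toLinearMap
  let d := e.toLinearMap ∘ₗ f.rangeRestrict
  obtain ⟨p, hp⟩ := c.exists_leftInverse_of_injective
    (LinearMap.ker_eq_bot.2 (Subtype.val_injective.comp e.symm.injective))
  obtain ⟨q, hq⟩ := d.exists_rightInverse_of_surjective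
    (LinearMap.range_eq_top.2 (e.surjective.comp f.surjective_rangeRestrict))
  have hcd : c ∘ₗ d = f := by ext; simp [c, d]
  refine ⟨LinearMap.toMatrix' c, LinearMap.toMatrix' d, LinearMap.toMatrix' p,
    LinearMap.toMatrix' q, ?_, ?_, ?_⟩
  · rw [← LinearMap.toMatrix'_comp, hcd, LinearMap.toMatrix'_toLin']
  · rw [← LinearMap.toMatrix'_comp, hp, LinearMap.toMatrix'_id]
  · rw [← LinearMap.toMatrix'_comp, hq, LinearMap.toMatrix'_id]

theorem matrix_rank_map_le [Finite a] (φ : k →+* L) (A : Matrix a b k) :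
    (A.map φ).rank ≤ A.rank := by
  have := Fintype.ofFinite a
  obtain ⟨C, D, -, -, hA, -, -⟩ := exists_rank_factorization A
  calc (A.map φ).rank = (C.map φ * D.map φ).rank := by rw [← Matrix.map_mul, ← hA]
    _ ≤ (C.map φ).rank := Matrix.rank_mul_le_left _ _
    _ ≤ A.rank := (Matrix.rank_le_card_width _).trans_eq (Fintype.card_fin _)

theorem rank_map_algHom_le_rank_map [Finite a] {B : Type*} [CommRing B] [Algebra k B]
    (φ : B →ₐ[k] k) {ψ : B →+* L} (hψ : Function.Injective ψ) (A : Matrix a b B) :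
    (A.map φ).rank ≤ (A.map ψ).rank := by
  have := Fintype.ofFinite a
  -- Lifting `P` and `Q` to `B` produces a square matrix of size `rank (φ A)` whose determinant is
  -- nonzero because its image under `φ` is `1`.
  obtain ⟨C, D, P, Q, hA, hPC, hDQ⟩ := exists_rank_factorization (A.map φ)
  let P' := P.map (algebraMap k B)
  let Q' := Q.map (algebraMap k B)
  have hφ : (P' * A * Q').map φ = 1 := by
    have hP : P'.map φ = P := by ext; simp [P']
    have hQ : Q'.map φ = Q := by ext; simp [Q']
    calc (P' * A * Q').map φ = P * A.map φ * Q := by rw [Matrix.map_mul, Matrix.map_mul, hP, hQ]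
      _ = P * (C * D) * Q := congrArg (P * · * Q) hA
      _ = 1 := by rw [← Matrix.mul_assoc, hPC, Matrix.one_mul, hDQ]
  have hdet : (P' * A * Q').det ≠ 0 := fun h ↦ by
    have := φ.map_det (P' * A * Q')
    rw [AlgHom.mapMatrix_apply, hφ, h, map_zero, Matrix.det_one] at this
    exact zero_ne_one this
  have hdetψ : ((P' * A * Q').map ψ).det ≠ 0 := by
    rw [← RingHom.mapMatrix_apply, ← RingHom.map_det]
    exact (map_ne_zero_iff ψ hψ).2 hdet
  calc (A.map φ).rank = ((P' * A * Q').map ψ).rank := by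
        rw [Matrix.rank_of_det_ne_zero hdetψ, Fintype.card_fin]
    _ = (P'.map ψ * A.map ψ * Q'.map ψ).rank := by rw [Matrix.map_mul, Matrix.map_mul]
    _ ≤ (P'.map ψ * A.map ψ).rank := Matrix.rank_mul_le_left _ _
    _ ≤ (A.map ψ).rank := Matrix.rank_mul_le_right _ _

end Rank

section Specialization

variable {k : Type*} [Field k]

theorem exists_algHom_apply_eq_zero [IsAlgClosed k] {B : Type*} [CommRing B] [Algebra k B]
    [Algebra.FiniteType k B] {y : B} (hy : ¬ IsUnit y) : ∃ φ : B →ₐ[k] k, φ y = 0 := by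
  obtain ⟨M, hM, hyM⟩ := exists_max_ideal_of_mem_nonunits hy
  let := Ideal.Quotient.field M
  have := finite_of_finite_type_of_isJacobsonRing k (B ⧸ M)
  let e : k ≃ₐ[k] (B ⧸ M) := AlgEquiv.ofBijective (Algebra.ofId k (B ⧸ M))
    IsAlgClosed.algebraMap_bijective_of_isIntegral
  exact ⟨e.symm.toAlgHom.comp (Ideal.Quotient.mkₐ k M), by
    simp [Ideal.Quotient.eq_zero_iff_mem.2 hyM]⟩

variable {L : Type*} [Field L] [Algebra k L] {ι : Type*} [Finite ι] {ξ : ι → L}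

theorem exists_valuationSubring_div_mem {i₀ : ι} (hξ : Transcendental k (ξ i₀)) :
    ∃ (V : ValuationSubring L) (j : ι), (∀ c : k, algebraMap k L c ∈ V) ∧ ξ j ∉ V ∧
      ∀ i, ξ i / ξ j ∈ V := by
  have hint : ξ i₀ ∉ (integralClosure k L).toSubring := fun h ↦ hξ (IsIntegral.isAlgebraic h)
  obtain ⟨V, hV, hi₀⟩ := Subring.exists_le_valuationSubring_of_isIntegrallyClosedIn hint
  have : Nonempty ι := ⟨i₀⟩
  obtain ⟨j, hj⟩ := Finite.exists_max fun i ↦ V.valuation (ξ i)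
  refine ⟨V, j, fun c ↦ hV (algebraMap_mem (integralClosure k L) c), fun hjV ↦ hi₀ ?_,
    fun i ↦ ?_⟩
  · exact V.valuation_le_one_iff _ |>.1 ((hj i₀).trans (V.valuation_le_one_iff _ |>.2 hjV))
  · rw [← V.valuation_le_one_iff, map_div₀]
    exact div_le_one_of_le₀ (hj i) zero_le

theorem exists_specialization_at_infinity [IsAlgClosed k] {i₀ : ι} (hξ : Transcendental k (ξ i₀)) :
    ∃ j, ξ j ≠ 0 ∧ ∃ (B : Subalgebra k L) (y : B) (z : ι → B) (φ : B →ₐ[k] k),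
      (y : L) = (ξ j)⁻¹ ∧ (∀ i, (z i : L) = ξ i / ξ j) ∧ φ y = 0 ∧ φ (z j) = 1 := by
  obtain ⟨V, j, hkV, hjV, hdiv⟩ := exists_valuationSubring_div_mem hξ
  have hj0 : ξ j ≠ 0 := fun h ↦ hjV (h ▸ V.zero_mem)
  let S : Set L := insert (ξ j)⁻¹ (Set.range fun i ↦ ξ i / ξ j)
  have hSV : S ⊆ V := Set.insert_subset ((V.mem_or_inv_mem _).resolve_left hjV)
    (Set.range_subset_iff.2 hdiv)
  let B := Algebra.adjoin k S
  let y : B := ⟨(ξ j)⁻¹, Algebra.subset_adjoin (Set.mem_insert _ _)⟩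
  let z (i : ι) : B := ⟨ξ i / ξ j, Algebra.subset_adjoin (Set.mem_insert_of_mem _ ⟨i, rfl⟩)⟩
  have hBV : ∀ x ∈ B, x ∈ V := fun x hx ↦
    Algebra.adjoin_le (S := { V.toSubring with algebraMap_mem' := hkV }) hSV hx
  have hy : ¬ IsUnit y := fun hu ↦ by
    obtain ⟨w, hw⟩ := isUnit_iff_exists_inv.1 hu
    have hw' : (w : L) = ξ j := by
      simpa [y] using eq_inv_of_mul_eq_one_right (congrArg Subtype.val hw)
    exact hjV (hw' ▸ hBV w w.2)
  have hS : S.Finite := (Set.finite_range _).insert _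
  have : Algebra.FiniteType k B :=
    (Subalgebra.fg_iff_finiteType B).1 ⟨hS.toFinset, by rw [hS.coe_toFinset]⟩
  obtain ⟨φ, hφ⟩ := exists_algHom_apply_eq_zero (k := k) hy
  have hz : z j = 1 := Subtype.ext (div_self hj0)
  exact ⟨j, hj0, B, y, z, φ, rfl, fun _ ↦ rfl, hφ, hz ▸ map_one φ⟩

end Specialization

theorem exists_ne_zero_rank_sum_smul_le {k L : Type*} [Field k] [IsAlgClosed k] [Field L]
    [Algebra k L] {ι a b : Type*} [Fintype ι] [Finite a] [Fintype b] {ξ : ι → L} {i₀ : ι}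
    (hξ : Transcendental k (ξ i₀)) (M₀ : Matrix a b k) (M : ι → Matrix a b k) :
    ∃ v : ι → k, v ≠ 0 ∧ ((∑ i, v i • M i).map (algebraMap k L)).rank ≤
      (M₀.map (algebraMap k L) + ∑ i, ξ i • (M i).map (algebraMap k L)).rank := by
  obtain ⟨j, hj0, B, y, z, φ, hy, hz, hφy, hφz⟩ := exists_specialization_at_infinity hξ
  let A : Matrix a b B := y • M₀.map (algebraMap k B) + ∑ i, z i • (M i).map (algebraMap k B)
  have hAφ : A.map φ = ∑ i, φ (z i) • M i := by
    ext s t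
    simp [A, Matrix.sum_apply, hφy]
  have hAL : A.map B.val.toRingHom =
      (ξ j)⁻¹ • (M₀.map (algebraMap k L) + ∑ i, ξ i • (M i).map (algebraMap k L)) := by
    ext s t
    have (x : k) : ((algebraMap k B x : B) : L) = algebraMap k L x := rfl
    simp [A, Matrix.sum_apply, hy, hz, this, mul_add, Finset.mul_sum, div_eq_inv_mul, mul_assoc]
  refine ⟨fun i ↦ φ (z i), fun h ↦ one_ne_zero (hφz.symm.trans (congrFun h j)), ?_⟩
  calc _ ≤ (∑ i, φ (z i) • M i).rank := matrix_rank_map_le _ _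
    _ ≤ (A.map B.val.toRingHom).rank := hAφ ▸ rank_map_algHom_le_rank_map φ Subtype.val_injective A
    _ = _ := by
      rw [hAL, Matrix.rank_smul_of_mem_nonZeroDivisors]
      exact mem_nonZeroDivisors_of_ne_zero (inv_ne_zero hj0)

section Dimension

variable {L V : Type*} [Field L] [AddCommGroup V] [Module L V]

theorem finrank_map_add_finrank_inf_ker {W : Type*} [AddCommGroup W] [Module L W]
    (f : V →ₗ[L] W) (R : Submodule L V) [FiniteDimensional L R] :
    finrank L (R.map f) + finrank L ↥(R ⊓ LinearMap.ker f) = finrank L R := by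
  rw [← (f.domRestrict R).finrank_range_add_finrank_ker, LinearMap.range_domRestrict,
    LinearMap.ker_domRestrict, ← Submodule.finrank_map_subtype_eq, Submodule.map_comap_subtype]

theorem rank_of_apply_eq_finrank_map_span {a s : Type*} [Fintype s] (f : V →ₗ[L] (a → L))
    (b : s → V) : (Matrix.of fun t i ↦ f (b i) t).rank =
      finrank L ((Submodule.span L (Set.range b)).map f) := by
  rw [Matrix.rank_eq_finrank_span_cols, Submodule.map_span, ← Set.range_comp]
  rfl

theorem finrank_inf_add_finrank_inf_le (A B R : Submodule L V) [FiniteDimensional L R] :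
    finrank L ↥(A ⊓ R) + finrank L ↥(R ⊓ B) ≤ finrank L R + finrank L ↥(A ⊓ R ⊓ B) := by
  have hinf : (A ⊓ R) ⊓ (R ⊓ B) = A ⊓ R ⊓ B := by rw [← inf_assoc, inf_assoc A, inf_idem]
  rw [← Submodule.finrank_sup_add_finrank_inf_eq, hinf]
  gcongr
  exact Submodule.finrank_mono (sup_le inf_le_right inf_le_left)

theorem exists_ne_zero_finrank_inf_ker_le {k : Type*} [Field k] [IsAlgClosed k] [Algebra k L]
    {ι a : Type*} [Fintype ι] [Finite a] {ξ : ι → L} {i₀ : ι} (hξ : Transcendental k (ξ i₀))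
    {s : Set V} [FiniteDimensional L (Submodule.span L s)] {g₀ : V →ₗ[L] (a → L)}
    {g : ι → V →ₗ[L] (a → L)} (hg₀ : ∀ x ∈ s, ∀ t, g₀ x t ∈ Set.range (algebraMap k L))
    (hg : ∀ i, ∀ x ∈ s, ∀ t, g i x t ∈ Set.range (algebraMap k L)) :
    ∃ v : ι → k, v ≠ 0 ∧
      finrank L ↥(Submodule.span L s ⊓ LinearMap.ker (g₀ + ∑ i, ξ i • g i)) ≤
        finrank L ↥(Submodule.span L s ⊓ LinearMap.ker (∑ i, algebraMap k L (v i) • g i)) := by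
  have hfg : (Submodule.span L s).FG := Module.Finite.iff_fg.1 inferInstance
  obtain ⟨b, hbs, hb⟩ := (Submodule.fg_span_iff_fg_span_finset_subset s).1 hfg
  have hspan : Submodule.span L (Set.range ((↑) : b → V)) = Submodule.span L s := by
    rw [hb, Subtype.range_coe]
  choose M₀ hM₀ using fun (t : a) (x : b) ↦ hg₀ x (hbs x.2) t
  choose M hM using fun (i : ι) (t : a) (x : b) ↦ hg i x (hbs x.2) t
  obtain ⟨v, hv, hrank⟩ := exists_ne_zero_rank_sum_smul_le hξ (.of M₀) (fun i ↦ .of (M i))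
  refine ⟨v, hv, ?_⟩
  have hξM : (Matrix.of M₀).map (algebraMap k L) + ∑ i, ξ i • (Matrix.of (M i)).map (algebraMap k L)
      = .of fun t (x : b) ↦ (g₀ + ∑ i, ξ i • g i) x t := by
    ext t x
    simp [Matrix.sum_apply, hM₀, hM]
  have hvM : (∑ i, v i • Matrix.of (M i)).map (algebraMap k L) =
      .of fun t (x : b) ↦ (∑ i, algebraMap k L (v i) • g i) x t := by
    ext t x
    simp [Matrix.sum_apply, hM, Algebra.smul_def]
  rw [hξM, hvM, rank_of_apply_eq_finrank_map_span, rank_of_apply_eq_finrank_map_span, hspan]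
    at hrank
  have hξdim := finrank_map_add_finrank_inf_ker (g₀ + ∑ i, ξ i • g i)
    (Submodule.span L s)
  have hvdim := finrank_map_add_finrank_inf_ker (∑ i, algebraMap k L (v i) • g i)
    (Submodule.span L s)
  omega

end Dimension

theorem exists_GL_single_vecMul_eq {σ k : Type*} [Fintype σ] [DecidableEq σ] [Field k] (l : σ)
    {v : σ → k} (hv : v ≠ 0) :
    ∃ A : GL σ k, Pi.single l 1 ᵥ* (A : Matrix σ σ k) = v := by
  have hl : (Pi.single l 1 : σ → k) ≠ 0 := by simp
  let el := LinearEquiv.toSpanNonzeroSingleton k (σ → k) _ hl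
  let ev := LinearEquiv.toSpanNonzeroSingleton k (σ → k) _ hv
  obtain ⟨g, hg⟩ := Submodule.exists_linearEquiv_restrict_eq (el.symm ≪≫ₗ ev)
  have hgl : g (Pi.single l 1) = v :=
    calc g (Pi.single l 1) = g (el 1) := by simp [el]
      _ = ev (el.symm (el 1)) := (hg _).symm
      _ = v := by simp [ev, el.symm_apply_apply]
  refine ⟨⟨g.toLinearMap.toMatrixRight', g.symm.toLinearMap.toMatrixRight', ?_, ?_⟩, ?_⟩
  · rw [← LinearMap.toMatrixRight'_comp, g.symm_comp, LinearMap.toMatrixRight'_id]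
  · rw [← LinearMap.toMatrixRight'_comp, g.comp_symm, LinearMap.toMatrixRight'_id]
  · rw [single_one_vecMul]
    exact hgl

section Duality

variable {σ K : Type*} [Fintype σ] [CommRing K]

/-- The identification of a family `f` indexed by multi-indices with the linear functional on
polynomials sending the monomial `X ^ κ` to `f κ`. -/
def toDual : ((σ → ℕ) → K) ≃ₗ[K] Dual K (MvPolynomial σ K) :=
  LinearEquiv.funCongrLeft K K Finsupp.equivFunOnFinite ≪≫ₗ
    (MvPolynomial.basisMonomials σ K).constr K

theorem toDual_monomial (f : (σ → ℕ) → K) (s : σ →₀ ℕ) (c : K) :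
    toDual f (MvPolynomial.monomial s c) = c * f s := by
  have h : MvPolynomial.monomial s c = c • MvPolynomial.basisMonomials σ K s := by
    simp [MvPolynomial.smul_monomial]
  rw [h, map_smul, toDual, LinearEquiv.trans_apply, Basis.constr_basis, smul_eq_mul]
  rfl

theorem toDual_map {L : Type*} [CommRing L] (φ : K →+* L) (f : (σ → ℕ) → K)
    (p : MvPolynomial σ K) : toDual (φ ∘ f) (p.map φ) = φ (toDual f p) := by
  induction p using MvPolynomial.induction_on' with
  | monomial s c => simp [toDual_monomial]
  | add p q hp hq => simp only [map_add, hp, hq]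

/-- The linear form `∑ j, v j * X j`, encoded as the one-row case of `Matrix.toMvPolynomial` so that
its behaviour under linear substitutions is that of matrix products. -/
def linearForm (v : σ → K) : MvPolynomial σ K :=
  (replicateRow Unit v).toMvPolynomial ()

theorem linearForm_vecMul (v : σ → K) (A : Matrix σ σ K) :
    linearForm (v ᵥ* A) = MvPolynomial.bind₁ A.toMvPolynomial (linearForm v) := by
  rw [linearForm, replicateRow_vecMul, toMvPolynomial_mul, linearForm]

/-- The families that vanish at every multi-index of degree `d`, written as the kernel of a
restriction map. -/
def vanishingInDegree (σ K : Type*) [Fintype σ] [CommRing K] (d : ℕ) :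
    Submodule K ((σ → ℕ) → K) :=
  LinearMap.ker (LinearMap.funLeft K K (Subtype.val : {κ : σ → ℕ // ∑ j, κ j = d} → σ → ℕ))

theorem mem_vanishingInDegree {d : ℕ} {f : (σ → ℕ) → K} :
    f ∈ vanishingInDegree σ K d ↔ ∀ κ, ∑ j, κ j = d → f κ = 0 := by
  simp [vanishingInDegree, funext_iff, LinearMap.funLeft_apply]

theorem toDual_eq_zero_of_isHomogeneous {d : ℕ} {f : (σ → ℕ) → K}
    (hf : f ∈ vanishingInDegree σ K d) {p : MvPolynomial σ K} (hp : p.IsHomogeneous d) :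
    toDual f p = 0 := by
  rw [← p.support_sum_monomial_coeff, map_sum]
  refine Finset.sum_eq_zero fun s hs ↦ ?_
  have hsd : ∑ j, s j = d := by
    rw [← s.degree_eq_sum, Finsupp.degree_eq_weight_one]
    exact hp (MvPolynomial.mem_support_iff.1 hs)
  rw [toDual_monomial, mem_vanishingInDegree.1 hf s hsd, mul_zero]

variable [DecidableEq σ]

/-- The contraction `D_v f = ∑ j, v j • f (· + e_j)`. Under `toDual` it is the transpose of
multiplication by `linearForm v`. -/
def contractAlong (v : σ → K) : ((σ → ℕ) → K) →ₗ[K] ((σ → ℕ) → K) :=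
  ∑ j, v j • LinearMap.funLeft K K (· + Pi.single j 1)

theorem contractAlong_apply (v : σ → K) (f : (σ → ℕ) → K) (μ : σ → ℕ) :
    contractAlong v f μ = ∑ j, v j * f (μ + Pi.single j 1) := by
  simp [contractAlong, LinearMap.sum_apply, Finset.sum_apply, LinearMap.funLeft_apply]

theorem toDual_contractAlong (v : σ → K) (f : (σ → ℕ) → K) (p : MvPolynomial σ K) :
    toDual (contractAlong v f) p = toDual f (p * linearForm v) := by
  induction p using MvPolynomial.induction_on' with
  | monomial s c =>
    simp [linearForm, Matrix.toMvPolynomial, toDual_monomial, contractAlong_apply, Finset.mul_sum,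
      MvPolynomial.monomial_mul, Finsupp.single_eq_pi_single, mul_assoc]
  | add p q hp hq => rw [map_add, hp, hq, add_mul, map_add]

theorem bind₁_toMvPolynomial_of_mul_eq_one {A B : Matrix σ σ K} (h : A * B = 1) :
    (MvPolynomial.bind₁ B.toMvPolynomial).comp (MvPolynomial.bind₁ A.toMvPolynomial) =
      AlgHom.id K (MvPolynomial σ K) := by
  ext1 i
  simp [← toMvPolynomial_mul, h, toMvPolynomial_one]

/-- The automorphism `X i ↦ ∑ j, A i j * X j` of the polynomial ring. -/
def linearSubst (A : GL σ K) : MvPolynomial σ K ≃ₐ[K] MvPolynomial σ K :=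
  AlgEquiv.ofAlgHom (MvPolynomial.bind₁ (A : Matrix σ σ K).toMvPolynomial)
    (MvPolynomial.bind₁ (↑A⁻¹ : Matrix σ σ K).toMvPolynomial)
    (bind₁_toMvPolynomial_of_mul_eq_one A.inv_mul) (bind₁_toMvPolynomial_of_mul_eq_one A.mul_inv)

/-- The transpose, under `toDual`, of the linear substitution `linearSubst A`. -/
def dualSubst (A : GL σ K) : ((σ → ℕ) → K) ≃ₗ[K] ((σ → ℕ) → K) :=
  toDual ≪≫ₗ (linearSubst A).toLinearEquiv.dualMap ≪≫ₗ toDual.symm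

theorem toDual_dualSubst (A : GL σ K) (f : (σ → ℕ) → K) (p : MvPolynomial σ K) :
    toDual (dualSubst A f) p =
      toDual f (MvPolynomial.bind₁ (A : Matrix σ σ K).toMvPolynomial p) := by
  simp [dualSubst, linearSubst]

theorem dualSubst_apply (A : GL σ K) (f : (σ → ℕ) → K) (κ : σ → ℕ) :
    dualSubst A f κ = toDual f (MvPolynomial.bind₁ (A : Matrix σ σ K).toMvPolynomial
      (MvPolynomial.monomial (Finsupp.equivFunOnFinite.symm κ) 1)) := by
  rw [← toDual_dualSubst, toDual_monomial, one_mul]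
  rfl

theorem dualSubst_symm (A : GL σ K) : (dualSubst A).symm = dualSubst A⁻¹ := rfl

theorem contractAlong_dualSubst (v : σ → K) (A : GL σ K) (f : (σ → ℕ) → K) :
    contractAlong v (dualSubst A f) = dualSubst A (contractAlong (v ᵥ* (A : Matrix σ σ K)) f) := by
  refine toDual.injective (LinearMap.ext fun p ↦ ?_)
  rw [toDual_contractAlong, toDual_dualSubst, toDual_dualSubst, toDual_contractAlong,
    linearForm_vecMul, map_mul]

theorem dualSubst_map {L : Type*} [CommRing L] (φ : K →+* L) (A : GL σ K)
    (f : (σ → ℕ) → K) :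
    dualSubst (GeneralLinearGroup.map φ A) (φ ∘ f) = φ ∘ dualSubst A f := by
  have hA : (GeneralLinearGroup.map φ A : Matrix σ σ L).toMvPolynomial =
      fun i ↦ ((A : Matrix σ σ K).toMvPolynomial i).map φ :=
    funext fun i ↦ toMvPolynomial_map φ _ i
  funext κ
  rw [dualSubst_apply, Function.comp_apply, dualSubst_apply, ← toDual_map, MvPolynomial.map_bind₁,
    MvPolynomial.map_monomial, φ.map_one, hA]

theorem dualSubst_mem_vanishingInDegree {d : ℕ} (A : GL σ K) {f : (σ → ℕ) → K}
    (hf : f ∈ vanishingInDegree σ K d) : dualSubst A f ∈ vanishingInDegree σ K d := by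
  refine mem_vanishingInDegree.2 fun κ hκ ↦ ?_
  rw [dualSubst_apply]
  refine toDual_eq_zero_of_isHomogeneous hf ?_
  have hκ : (MvPolynomial.monomial (Finsupp.equivFunOnFinite.symm κ) (1 : K)).IsHomogeneous d :=
    MvPolynomial.isHomogeneous_monomial _ (by rw [Finsupp.degree_eq_sum]; exact hκ)
  rw [← one_mul d]
  exact hκ.aeval _ (toMvPolynomial_isHomogeneous (A : Matrix σ σ K))

theorem dualSubst_mem_vanishingInDegree_iff {d : ℕ} (A : GL σ K) {f : (σ → ℕ) → K} :
    dualSubst A f ∈ vanishingInDegree σ K d ↔ f ∈ vanishingInDegree σ K d := by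
  refine ⟨fun h ↦ ?_, dualSubst_mem_vanishingInDegree A⟩
  have := dualSubst_mem_vanishingInDegree A⁻¹ h
  rwa [← dualSubst_symm, LinearEquiv.symm_apply_apply] at this

end Duality

section MultiIndexSpaces

variable {n N : ℕ}

theorem wt_add_single (μ : Fin n → ℕ) (j : Fin n) : wt (μ + Pi.single j 1) = wt μ + 1 := by
  simp [wt, Finset.sum_add_distrib]

theorem finite_setOf_wt_le (n N : ℕ) : {κ : Fin n → ℕ | wt κ ≤ N}.Finite :=
  (Set.finite_Iic fun _ ↦ N).subset fun _ hκ j ↦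
    (Finset.single_le_sum (fun _ _ ↦ Nat.zero_le _) (Finset.mem_univ j)).trans hκ

theorem finite_setOf_wt_eq (n N : ℕ) : {κ : Fin n → ℕ | wt κ = N}.Finite :=
  (finite_setOf_wt_le n N).subset fun _ hκ ↦ le_of_eq hκ

theorem mem_span_Evec_iff {P : (Fin n → ℕ) → Prop} (hP : {κ | P κ}.Finite)
    {f : (Fin n → ℕ) → ℂ} :
    f ∈ Submodule.span ℂ {v | ∃ κ, P κ ∧ v = Evec κ} ↔ ∀ κ, ¬ P κ → f κ = 0 := by
  constructor
  · intro hf κ hκ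
    refine (Submodule.span_le (p := LinearMap.ker (LinearMap.proj κ))).2 ?_ hf
    rintro _ ⟨μ, hμ, rfl⟩
    exact if_neg (by rintro rfl; exact hκ hμ)
  · intro hf
    have hsum : f = ∑ κ ∈ hP.toFinset, f κ • Evec κ := by
      ext μ
      by_cases hμ : P μ
      · simp [Evec, hμ]
      · simp [Evec, hμ, hf μ hμ]
    rw [hsum]
    exact Submodule.sum_mem _ fun κ hκ ↦ Submodule.smul_mem _ _
      (Submodule.subset_span ⟨κ, hP.mem_toFinset.1 hκ, rfl⟩)

theorem mem_OmegaSpace_iff {f : (Fin n → ℕ) → ℂ} :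
    f ∈ OmegaSpace n N ↔ ∀ κ, ¬ inOmega n N κ → f κ = 0 :=
  mem_span_Evec_iff ((finite_setOf_wt_le n N).subset fun _ h ↦ h.2)

theorem mem_Kspace_iff {l : Fin n} {f : (Fin n → ℕ) → ℂ} :
    f ∈ Kspace n N l ↔ ∀ κ, ¬ (inOmega n N κ ∧ κ l = 0) → f κ = 0 := by
  rw [← mem_span_Evec_iff ((finite_setOf_wt_le n N).subset fun _ h ↦ h.1.2)]
  simp only [Kspace, and_assoc]

theorem mem_OmegaSpace_iff_vanishingInDegree {f : (Fin n → ℕ) → ℂ} :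
    f ∈ OmegaSpace n N ↔ ∀ d, ¬ (N - 1 ≤ d ∧ d ≤ N) → f ∈ vanishingInDegree (Fin n) ℂ d := by
  simp only [mem_OmegaSpace_iff, mem_vanishingInDegree]
  exact ⟨fun h d hd κ hκ ↦ h κ (by rwa [← hκ] at hd), fun h κ hκ ↦ h _ hκ κ rfl⟩

instance finiteDimensional_OmegaSpace : FiniteDimensional ℂ (OmegaSpace n N) := by
  refine FiniteDimensional.span_of_finite ℂ (((finite_setOf_wt_le n N).image Evec).subset ?_)
  rintro _ ⟨κ, hκ, rfl⟩
  exact ⟨κ, hκ.2, rfl⟩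

theorem add_single_eq_iff_eq_sub1 {κ μ : Fin n → ℕ} {j : Fin n} :
    μ + Pi.single j 1 = κ ↔ κ j ≠ 0 ∧ μ = sub1 κ j := by
  constructor
  · rintro rfl
    refine ⟨by simp, ?_⟩
    ext i
    obtain rfl | hi := eq_or_ne i j <;> simp [sub1, *]
  · rintro ⟨hj, rfl⟩
    ext i
    obtain rfl | hi := eq_or_ne i j <;> simp [sub1, Nat.sub_add_cancel, Nat.one_le_iff_ne_zero, *]

theorem Zvec_eq (ξ : Fin n → ℂ) (κ : Fin n → ℕ) :
    Zvec ξ κ = Evec κ + contractAlong ξ (Evec κ) := by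
  ext μ
  rw [Zvec, Pi.add_apply, Pi.add_apply, Finset.sum_apply, contractAlong_apply]
  congr! 2 with j
  by_cases hj : κ j = 0 <;> simp [Evec, add_single_eq_iff_eq_sub1, hj]

theorem mem_Fspace_iff_exists {ξ : Fin n → ℂ} {f : (Fin n → ℕ) → ℂ} :
    f ∈ Fspace n N ξ ↔ ∃ g, (∀ κ, wt κ ≠ N → g κ = 0) ∧ g + contractAlong ξ g = f := by
  have hF : Fspace n N ξ = (Submodule.span ℂ {v | ∃ κ, wt κ = N ∧ v = Evec κ}).map
      (LinearMap.id + contractAlong ξ) := by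
    rw [Submodule.map_span, Fspace]
    congr 1
    ext v
    constructor
    · rintro ⟨κ, hκ, rfl⟩
      exact ⟨_, ⟨κ, hκ, rfl⟩, (Zvec_eq ξ κ).symm⟩
    · rintro ⟨_, ⟨κ, hκ, rfl⟩, rfl⟩
      exact ⟨κ, hκ, (Zvec_eq ξ κ).symm⟩
  rw [hF, Submodule.mem_map]
  simp only [mem_span_Evec_iff (finite_setOf_wt_eq n N), LinearMap.add_apply, LinearMap.id_apply,
    ne_eq]

theorem contractAlong_apply_eq_zero {g : (Fin n → ℕ) → ℂ} (hg : ∀ κ, wt κ ≠ N → g κ = 0)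
    (v : Fin n → ℂ) {μ : Fin n → ℕ} (hμ : wt μ + 1 ≠ N) : contractAlong v g μ = 0 := by
  rw [contractAlong_apply]
  exact Finset.sum_eq_zero fun j _ ↦ by rw [hg _ (by rwa [wt_add_single]), mul_zero]

theorem mem_Fspace_iff (hN : 1 ≤ N) {ξ : Fin n → ℂ} {f : (Fin n → ℕ) → ℂ} :
    f ∈ Fspace n N ξ ↔
      f ∈ OmegaSpace n N ∧ f - contractAlong ξ f ∈ vanishingInDegree (Fin n) ℂ (N - 1) := by
  rw [mem_Fspace_iff_exists, mem_OmegaSpace_iff, mem_vanishingInDegree]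
  constructor
  · rintro ⟨g, hg, rfl⟩
    have hξg : ∀ μ, wt μ ≠ N - 1 → contractAlong ξ g μ = 0 := fun μ hμ ↦
      contractAlong_apply_eq_zero hg ξ (by omega)
    refine ⟨fun κ hκ ↦ ?_, fun κ hκ ↦ ?_⟩
    · rw [inOmega] at hκ
      rw [Pi.add_apply, hg κ (by omega), hξg κ (by omega), add_zero]
    · change wt κ = N - 1 at hκ
      rw [map_add, Pi.sub_apply, Pi.add_apply, Pi.add_apply, hg κ (by omega),
        contractAlong_apply_eq_zero hξg ξ (by omega)]
      ring
  · rintro ⟨hΩ, hf⟩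
    let g : (Fin n → ℕ) → ℂ := fun κ ↦ if wt κ = N then f κ else 0
    have hg : ∀ κ, wt κ ≠ N → g κ = 0 := fun κ hκ ↦ if_neg hκ
    have hgf : ∀ κ, wt κ = N → g κ = f κ := fun κ hκ ↦ if_pos hκ
    refine ⟨g, hg, funext fun κ ↦ ?_⟩
    rw [Pi.add_apply]
    by_cases hκ : wt κ + 1 = N
    · have hκf : f κ = contractAlong ξ f κ := sub_eq_zero.1 (hf κ (by rw [← hκ]; rfl))
      rw [hg κ (by omega), zero_add, hκf, contractAlong_apply, contractAlong_apply]
      exact Finset.sum_congr rfl fun j _ ↦ by rw [hgf _ (by rwa [wt_add_single])]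
    · rw [contractAlong_apply_eq_zero hg ξ hκ, add_zero]
      by_cases hκN : wt κ = N
      · exact hgf κ hκN
      · rw [hg κ hκN, hΩ κ (by rw [inOmega]; omega)]

theorem mem_Kspace_of_mem_Fspace (hN : 1 ≤ N) {ξ : Fin n → ℂ} {l : Fin n} {f : (Fin n → ℕ) → ℂ}
    (hf : f ∈ Fspace n N ξ)
    (hl : contractAlong (Pi.single l 1) f ∈ vanishingInDegree (Fin n) ℂ (N - 1)) :
    f ∈ Kspace n N l := by
  obtain ⟨g, hg, rfl⟩ := mem_Fspace_iff_exists.1 hf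
  have hgl : ∀ κ, κ l ≠ 0 → g κ = 0 := by
    intro κ hκl
    by_cases hκ : wt κ = N
    · obtain ⟨μ, rfl⟩ : ∃ μ : Fin n → ℕ, μ + Pi.single l 1 = κ :=
        ⟨_, add_single_eq_iff_eq_sub1.2 ⟨hκl, rfl⟩⟩
      have hμ := mem_vanishingInDegree.1 hl μ (Nat.eq_sub_of_add_eq (wt_add_single μ l ▸ hκ))
      rwa [contractAlong_apply, Fintype.sum_eq_single l fun j hj ↦ by simp [hj], Pi.single_eq_same,
        one_mul, Pi.add_apply, contractAlong_apply_eq_zero hg ξ (by omega), add_zero] at hμ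
    · exact hg κ hκ
  refine mem_Kspace_iff.2 fun κ hκ ↦ ?_
  by_cases hκl : κ l = 0
  · exact mem_OmegaSpace_iff.1 ((mem_Fspace_iff hN).1 hf).1 κ fun hκΩ ↦ hκ ⟨hκΩ, hκl⟩
  · rw [Pi.add_apply, hgl κ hκl, zero_add, contractAlong_apply]
    exact Finset.sum_eq_zero fun j _ ↦ by rw [hgl _ (by simp [hκl]), mul_zero]

end MultiIndexSpaces

section Transfer

variable {n N : ℕ} (A : GL (Fin n) ℂ)

theorem dualSubst_mem_OmegaSpace_iff {f : (Fin n → ℕ) → ℂ} :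
    dualSubst A f ∈ OmegaSpace n N ↔ f ∈ OmegaSpace n N := by
  simp only [mem_OmegaSpace_iff_vanishingInDegree, dualSubst_mem_vanishingInDegree_iff]

theorem dualSubst_mem_Fspace_iff (hN : 1 ≤ N) (ξ : Fin n → ℂ) {f : (Fin n → ℕ) → ℂ} :
    dualSubst A f ∈ Fspace n N ξ ↔ f ∈ Fspace n N (ξ ᵥ* (A : Matrix (Fin n) (Fin n) ℂ)) := by
  rw [mem_Fspace_iff hN, mem_Fspace_iff hN, contractAlong_dualSubst, ← map_sub,
    dualSubst_mem_OmegaSpace_iff, dualSubst_mem_vanishingInDegree_iff]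

theorem map_dualSubst_OmegaSpace :
    (OmegaSpace n N).map (dualSubst A).toLinearMap = OmegaSpace n N := by
  have hcomap : OmegaSpace n N = (OmegaSpace n N).comap (dualSubst A).toLinearMap :=
    Submodule.ext fun _ ↦ (dualSubst_mem_OmegaSpace_iff A).symm
  rw [hcomap, Submodule.map_comap_eq_of_surjective (dualSubst A).surjective, ← hcomap]

theorem map_dualSubst_Fspace (hN : 1 ≤ N) (ξ : Fin n → ℂ) :
    (Fspace n N (ξ ᵥ* (A : Matrix (Fin n) (Fin n) ℂ))).map (dualSubst A).toLinearMap =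
      Fspace n N ξ := by
  have hcomap : Fspace n N (ξ ᵥ* (A : Matrix (Fin n) (Fin n) ℂ)) =
      (Fspace n N ξ).comap (dualSubst A).toLinearMap :=
    Submodule.ext fun _ ↦ (dualSubst_mem_Fspace_iff A hN ξ).symm
  rw [hcomap, Submodule.map_comap_eq_of_surjective (dualSubst A).surjective]

theorem finrank_Fspace_inf_map_dualSubst (hN : 1 ≤ N) (ξ : Fin n → ℂ)
    (R : Submodule ℂ ((Fin n → ℕ) → ℂ)) :
    finrank ℂ ↥(Fspace n N ξ ⊓ R.map (dualSubst A).toLinearMap) =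
      finrank ℂ ↥(Fspace n N (ξ ᵥ* (A : Matrix (Fin n) (Fin n) ℂ)) ⊓ R) := by
  rw [← map_dualSubst_Fspace A hN, ← Submodule.map_inf _ (dualSubst A).injective,
    LinearEquiv.finrank_map_eq]

theorem ratIneq_map_dualSubst_iff (hN : 1 ≤ N) (ξ : Fin n → ℂ)
    (R : Submodule ℂ ((Fin n → ℕ) → ℂ)) :
    RatIneq n N ξ (R.map (dualSubst A).toLinearMap) ↔
      RatIneq n N (ξ ᵥ* (A : Matrix (Fin n) (Fin n) ℂ)) R := by
  have hinj := Submodule.map_injective_of_injective (dualSubst A).injective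
  have hbot : R.map (dualSubst A).toLinearMap = ⊥ ↔ R = ⊥ := by
    rw [← hinj.eq_iff (a := R), Submodule.map_bot]
  have hΩ : R.map (dualSubst A).toLinearMap = OmegaSpace n N ↔ R = OmegaSpace n N := by
    rw [← hinj.eq_iff (a := R), map_dualSubst_OmegaSpace]
  rw [RatIneq, RatIneq, finrank_Fspace_inf_map_dualSubst A hN,
    LinearEquiv.finrank_map_eq (dualSubst A) R, hbot, hΩ]

theorem finrank_inf_comap_contractAlong_le_finrank_inf_Kspace (hN : 1 ≤ N)
    (ξ : Fin n → ℂ) (l : Fin n) (R : Submodule ℂ ((Fin n → ℕ) → ℂ)) :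
    finrank ℂ ↥(Fspace n N (ξ ᵥ* (A : Matrix (Fin n) (Fin n) ℂ)) ⊓ R ⊓
        (vanishingInDegree (Fin n) ℂ (N - 1)).comap
          (contractAlong (Pi.single l 1 ᵥ* (A : Matrix (Fin n) (Fin n) ℂ)))) ≤
      finrank ℂ ↥(Fspace n N ξ ⊓ R.map (dualSubst A).toLinearMap ⊓ Kspace n N l) := by
  have : FiniteDimensional ℂ ↥(Fspace n N ξ ⊓ R.map (dualSubst A).toLinearMap ⊓ Kspace n N l) :=
    Submodule.finiteDimensional_of_le (S₂ := OmegaSpace n N) fun f hf ↦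
      ((mem_Fspace_iff hN).1 hf.1.1).1
  rw [← (dualSubst A).finrank_map_eq]
  refine Submodule.finrank_mono ?_
  rintro _ ⟨f, ⟨⟨hfF, hfR⟩, hfl⟩, rfl⟩
  have hF : dualSubst A f ∈ Fspace n N ξ := (dualSubst_mem_Fspace_iff A hN ξ).2 hfF
  refine ⟨⟨hF, f, hfR, rfl⟩, mem_Kspace_of_mem_Fspace hN hF ?_⟩
  rw [LinearEquiv.coe_coe, contractAlong_dualSubst]
  exact dualSubst_mem_vanishingInDegree A hfl

end Transfer

section AlgebraicNumbers

variable {n N : ℕ}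

/-- The field `ℚ̄` of algebraic numbers inside `ℂ`. -/
abbrev Qbar : IntermediateField ℚ ℂ := algebraicClosure ℚ ℂ

instance isAlgClosed_Qbar : IsAlgClosed Qbar := (algebraicClosure.isAlgClosure ℚ ℂ).isAlgClosed

theorem isAlgebraic_iff_mem_range_algebraMap {x : ℂ} :
    IsAlgebraic ℚ x ↔ x ∈ Set.range (algebraMap Qbar ℂ) := by
  rw [← mem_algebraicClosure_iff]
  exact Subtype.range_coe.symm ▸ Iff.rfl

theorem LinIndepOverQbar.transcendental {ξ : Fin n → ℂ} (hξ : LinIndepOverQbar n ξ) (i : Fin n) :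
    Transcendental Qbar (ξ i) := by
  refine Transcendental.algebraicClosure fun hi ↦ ?_
  have hc (j : Fin n) : IsAlgebraic ℚ ((Pi.single i 1 : Fin n → ℂ) j) := by
    obtain rfl | hj := eq_or_ne j i
    · simpa using isAlgebraic_one
    · simpa [hj] using isAlgebraic_zero
  simpa using (hξ (-ξ i) (Pi.single i 1) hi.neg hc (by simp [Pi.single_apply])).2 i

theorem LinIndepOverQbar.vecMul {ξ : Fin n → ℂ} (hξ : LinIndepOverQbar n ξ) (A : GL (Fin n) Qbar) :
    LinIndepOverQbar n (ξ ᵥ* (GeneralLinearGroup.map (algebraMap Qbar ℂ) A :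
      Matrix (Fin n) (Fin n) ℂ)) := by
  intro a c ha hc h
  choose c' hc' using fun j ↦ isAlgebraic_iff_mem_range_algebraMap.1 (hc j)
  obtain rfl : algebraMap Qbar ℂ ∘ c' = c := funext hc'
  have hAc : (GeneralLinearGroup.map (algebraMap Qbar ℂ) A : Matrix (Fin n) (Fin n) ℂ) *ᵥ
      (algebraMap Qbar ℂ ∘ c') = algebraMap Qbar ℂ ∘ (A.1 *ᵥ c') :=
    funext fun j ↦ ((algebraMap Qbar ℂ).map_mulVec A.1 c' j).symm
  have hsum : a + (algebraMap Qbar ℂ ∘ (A.1 *ᵥ c')) ⬝ᵥ ξ = 0 := by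
    rw [← hAc, dotProduct_comm, dotProduct_mulVec, dotProduct_comm]
    exact h
  obtain ⟨ha0, hc0⟩ := hξ a _ ha (fun j ↦ isAlgebraic_iff_mem_range_algebraMap.2 ⟨_, rfl⟩) hsum
  have hAc0 : A.1 *ᵥ c' = 0 := funext fun j ↦ (algebraMap Qbar ℂ).injective (by simpa using hc0 j)
  have hc_zero : c' = 0 := mulVec_injective_of_isUnit A.isUnit (by simpa using hAc0)
  exact ⟨ha0, fun j ↦ by simp [hc_zero]⟩

theorem LinIndepOverQbar.exists_vecMul_eq {ξ : Fin n → ℂ} (hξ : LinIndepOverQbar n ξ)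
    (A : GL (Fin n) Qbar) : ∃ ξ', LinIndepOverQbar n ξ' ∧
      ξ' ᵥ* (GeneralLinearGroup.map (algebraMap Qbar ℂ) A : Matrix (Fin n) (Fin n) ℂ) = ξ := by
  refine ⟨_, hξ.vecMul A⁻¹, ?_⟩
  rw [vecMul_vecMul, ← Units.val_mul, ← map_mul, inv_mul_cancel, map_one, Units.val_one, vecMul_one]

theorem DefinedOverQbar.map_dualSubst {R : Submodule ℂ ((Fin n → ℕ) → ℂ)}
    (hR : DefinedOverQbar R) (A : GL (Fin n) Qbar) :
    DefinedOverQbar (R.map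
      (dualSubst (GeneralLinearGroup.map (algebraMap Qbar ℂ) A)).toLinearMap) := by
  obtain ⟨s, hs, rfl⟩ := hR
  refine ⟨_, ?_, (Submodule.map_span _ _).symm⟩
  rintro _ ⟨f, hf, rfl⟩ κ
  choose f' hf' using fun μ ↦ isAlgebraic_iff_mem_range_algebraMap.1 (hs f hf μ)
  obtain rfl : algebraMap Qbar ℂ ∘ f' = f := funext hf'
  rw [LinearEquiv.coe_coe, dualSubst_map]
  exact isAlgebraic_iff_mem_range_algebraMap.2 ⟨_, rfl⟩

theorem exists_ne_zero_finrank_Fspace_inf_le (hN : 1 ≤ N) {ξ : Fin n → ℂ} {i₀ : Fin n}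
    (hξ : Transcendental Qbar (ξ i₀)) {R : Submodule ℂ ((Fin n → ℕ) → ℂ)}
    (hRΩ : R ≤ OmegaSpace n N) (hR : DefinedOverQbar R) :
    ∃ v : Fin n → Qbar, v ≠ 0 ∧ finrank ℂ ↥(Fspace n N ξ ⊓ R) ≤ finrank ℂ ↥(R ⊓
      (vanishingInDegree (Fin n) ℂ (N - 1)).comap (contractAlong (algebraMap Qbar ℂ ∘ v))) := by
  obtain ⟨s, hs, rfl⟩ := hR
  have := Submodule.finiteDimensional_of_le hRΩ
  have : Finite {κ : Fin n → ℕ // ∑ j, κ j = N - 1} := finite_setOf_wt_eq n (N - 1)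
  let ρ := LinearMap.funLeft ℂ ℂ (Subtype.val : {κ : Fin n → ℕ // ∑ j, κ j = N - 1} → _)
  let g (j : Fin n) := ρ ∘ₗ LinearMap.funLeft ℂ ℂ (· + Pi.single j 1)
  have hg (w : Fin n → ℂ) : ∑ j, w j • g j = ρ ∘ₗ contractAlong w := by
    ext f κ
    simp [g, contractAlong, LinearMap.sum_apply]
  obtain ⟨v, hv, hdim⟩ := exists_ne_zero_finrank_inf_ker_le hξ (g₀ := -ρ) (g := g)
    (fun x hx t ↦ isAlgebraic_iff_mem_range_algebraMap.1 (hs x hx _).neg)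
    (fun j x hx t ↦ isAlgebraic_iff_mem_range_algebraMap.1 (hs x hx _))
  have hF : Submodule.span ℂ s ⊓ LinearMap.ker (-ρ + ∑ j, ξ j • g j) =
      Fspace n N ξ ⊓ Submodule.span ℂ s := by
    ext f
    have hρ : (-ρ + ∑ j, ξ j • g j) f = -ρ (f - contractAlong ξ f) := by
      rw [hg, LinearMap.add_apply, map_sub, neg_sub]
      exact neg_add_eq_sub _ _
    rw [Submodule.mem_inf, Submodule.mem_inf, LinearMap.mem_ker, hρ, neg_eq_zero,
      mem_Fspace_iff hN, and_comm]
    exact and_congr_left fun hf ↦ (and_iff_right (hRΩ hf)).symm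
  rw [hF, hg fun j ↦ algebraMap Qbar ℂ (v j), LinearMap.ker_comp] at hdim
  exact ⟨v, hv, hdim⟩

theorem exists_ne_zero_two_mul_finrank_Fspace_inf_le (hN : 1 ≤ N) {ξ : Fin n → ℂ} {i₀ : Fin n}
    (hξ : Transcendental Qbar (ξ i₀)) {R : Submodule ℂ ((Fin n → ℕ) → ℂ)}
    (hRΩ : R ≤ OmegaSpace n N) (hR : DefinedOverQbar R) :
    ∃ v : Fin n → Qbar, v ≠ 0 ∧
      2 * finrank ℂ ↥(Fspace n N ξ ⊓ R) ≤ finrank ℂ R + finrank ℂ ↥(Fspace n N ξ ⊓ R ⊓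
        (vanishingInDegree (Fin n) ℂ (N - 1)).comap (contractAlong (algebraMap Qbar ℂ ∘ v))) := by
  obtain ⟨v, hv, hdim⟩ := exists_ne_zero_finrank_Fspace_inf_le hN hξ hRΩ hR
  have := Submodule.finiteDimensional_of_le hRΩ
  refine ⟨v, hv, ?_⟩
  rw [two_mul]
  exact (Nat.add_le_add_left hdim _).trans (finrank_inf_add_finrank_inf_le _ _ R)

end AlgebraicNumbers

/-- **Lemma 5.3.** Let `m, N ≥ 1` (here the number of variables is `m + 1 ≥ 1`) and
`K = Span{E_κ : κ ∈ Ω, κ_m = 0}`. If the dimension inequality of Theorem 5.1 (with its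
case of equality) holds for every `ξ` with `1, ξ₁, …, ξ_m` linearly independent over
`ℚ̄` and every subspace `R ⊆ ℂ^Ω` defined over `ℚ̄` satisfying
`dim(F ∩ R ∩ K) ≥ 2·dim(F ∩ R) - dim R`, then it holds for every such `ξ` and every
subspace `R ⊆ ℂ^Ω` defined over `ℚ̄`. -/
theorem dimension_inequality_reduction_to_K_condition
    (m N : ℕ) (hN : 1 ≤ N)
    (H : ∀ ξ : Fin (m + 1) → ℂ, LinIndepOverQbar (m + 1) ξ →
      ∀ R : Submodule ℂ ((Fin (m + 1) → ℕ) → ℂ), R ≤ OmegaSpace (m + 1) N →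
        DefinedOverQbar R →
        2 * (Module.finrank ℂ ↥(Fspace (m + 1) N ξ ⊓ R) : ℝ) -
            (Module.finrank ℂ ↥R : ℝ) ≤
          (Module.finrank ℂ ↥(Fspace (m + 1) N ξ ⊓ R ⊓
              Kspace (m + 1) N (Fin.last m)) : ℝ) →
        RatIneq (m + 1) N ξ R) :
    ∀ ξ : Fin (m + 1) → ℂ, LinIndepOverQbar (m + 1) ξ →
      ∀ R : Submodule ℂ ((Fin (m + 1) → ℕ) → ℂ), R ≤ OmegaSpace (m + 1) N →
        DefinedOverQbar R → RatIneq (m + 1) N ξ R := by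
  intro ξ hξ R hRΩ hR
  obtain ⟨v, hv, hdim⟩ :=
    exists_ne_zero_two_mul_finrank_Fspace_inf_le hN (hξ.transcendental 0) hRΩ hR
  obtain ⟨A, rfl⟩ := exists_GL_single_vecMul_eq (Fin.last m) hv
  obtain ⟨ξ', hξ', rfl⟩ := hξ.exists_vecMul_eq A
  set Aℂ := GeneralLinearGroup.map (algebraMap Qbar ℂ) A with hAℂ
  have hv' : algebraMap Qbar ℂ ∘ (Pi.single (Fin.last m) 1 ᵥ* A.1) =
      Pi.single (Fin.last m) 1 ᵥ* Aℂ.1 := by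
    ext j
    simp [hAℂ]
  rw [hv'] at hdim
  have hK := finrank_inf_comap_contractAlong_le_finrank_inf_Kspace Aℂ hN ξ' (Fin.last m) R
  refine (ratIneq_map_dualSubst_iff Aℂ hN ξ' R).1 (H ξ' hξ' _ ?_ (hR.map_dualSubst A) ?_)
  · exact (Submodule.map_mono hRΩ).trans_eq (map_dualSubst_OmegaSpace Aℂ)
  · rw [finrank_Fspace_inf_map_dualSubst Aℂ hN, (dualSubst Aℂ).finrank_map_eq,
      sub_le_iff_le_add']
    exact_mod_cast hdim.trans (Nat.add_le_add_left hK _)
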